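/- arXiv:0801.0875 — 2 statements merged into one kernel-verified Lean document; each statement's English description precedes it below -/
import Mathlib

section
/- Let Γ be a finitely generated group such that every homomorphism from Γ to a finite group is trivial. Suppose Γ acts on a probability space (X, μ) by measure-preserving transformations and the action has discrete spectrum, i.e. L²(X, μ; ℂ) is the closed linear span of its finite-dimensional Γ-invariant closed subspaces under the Koopman representation. Then the Koopman representation is trivial: for every γ ∈ Γ and every f ∈ L²(X, μ; ℂ), the function x ↦ f(γ⁻¹ · x) equals f in L²(X, μ; ℂ). -/
open MeasureTheory

/-!
The Koopman operators restrict to every finite-dimensional invariant subspace `W`, giving a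
finite-dimensional complex representation of `Γ`. By the Malcev argument this representation is
trivial: since `Γ` is finitely generated, all matrix entries lie in a finitely generated subring
`A ⊆ ℂ`. The ring `ℤ` is Jacobson, so `A` is Jacobson too, its maximal ideals intersect in `0`, and
its residue fields are finite (`exists_maximal_finite_quotient`). If some matrix entry of
`ρ γ - 1` were nonzero, reducing modulo a maximal ideal of `A` that avoids it would give a
homomorphism from `Γ` to a finite matrix group that is nontrivial at `γ`
(`matrix_rep_trivial`). Hence every Koopman operator fixes each such `W` pointwise, and its
fixed space, being a closed subspace, is all of `L²` by discreteness of the spectrum.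
-/

theorem isJacobsonRing_int : IsJacobsonRing ℤ := by
  rw [isJacobsonRing_iff_prime_eq]
  intro P hP
  by_cases h : P = ⊥
  · subst h
    rw [eq_bot_iff]
    intro x hx
    -- `x * x + 1` is a unit of `ℤ`, so it equals `1`.
    have hu := Ideal.mem_jacobson_bot.mp hx x
    rw [Int.isUnit_iff] at hu
    rw [Ideal.mem_bot]
    rcases hu with hu | hu
    · exact mul_self_eq_zero.mp (by linarith)
    · nlinarith [mul_self_nonneg x]
  · have := hP.isMaximal h
    exact Ideal.jacobson_eq_self_of_isMaximal

/-- The `ℤ`-algebra structure is arbitrary so that the lemma applies to a quotient ring carrying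
its quotient algebra structure. -/
theorem finite_of_field_finiteType_int (K : Type*) [Field K] [i : Algebra ℤ K]
    [Algebra.FiniteType ℤ K] : Finite K := by
  obtain rfl : i = Ring.toIntAlgebra K := Subsingleton.elim _ _
  have := isJacobsonRing_int
  have hfin : Module.Finite ℤ K := finite_of_finite_type_of_isJacobsonRing ℤ K
  have hni : ¬ Function.Injective (algebraMap ℤ K) := fun hinj =>
    Int.not_isField (isField_of_isIntegral_of_isField hinj (Field.toIsField K))
  rw [injective_iff_map_eq_zero] at hni
  push Not at hni
  obtain ⟨n, hn, hn0⟩ := hni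
  refine Module.finite_of_fg_torsion K ?_
  intro x
  refine ⟨⟨n, mem_nonZeroDivisors_of_ne_zero hn0⟩, ?_⟩
  change n • x = 0
  rw [Algebra.smul_def, hn, zero_mul]

/-- A finitely generated integral domain is residually a finite field. -/
theorem exists_maximal_finite_quotient (A : Type*) [CommRing A] [IsDomain A]
    [Algebra.FiniteType ℤ A] (a : A) (ha : a ≠ 0) :
    ∃ m : Ideal A, a ∉ m ∧ Finite (A ⧸ m) := by
  have := isJacobsonRing_int
  have hA : IsJacobsonRing A := isJacobsonRing_of_finiteType (A := ℤ)
  have hj : (⊥ : Ideal A).jacobson = ⊥ := hA.out Ideal.isPrime_bot.isRadical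
  have hna : a ∉ (⊥ : Ideal A).jacobson := by rwa [hj, Ideal.mem_bot]
  rw [Ideal.jacobson, Ideal.mem_sInf] at hna
  push Not at hna
  obtain ⟨m, ⟨-, hm⟩, ham⟩ := hna
  refine ⟨m, ham, ?_⟩
  let _ := Ideal.Quotient.field m
  have hft : Algebra.FiniteType ℤ (A ⧸ m) :=
    Algebra.FiniteType.of_surjective (Ideal.Quotient.mkₐ ℤ m) (Ideal.Quotient.mkₐ_surjective ℤ m)
  exact @finite_of_field_finiteType_int (A ⧸ m) _ _ hft

/-- Malcev: a finitely generated group without nontrivial finite quotients has no nontrivial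
complex matrix representations. -/
theorem matrix_rep_trivial {Γ : Type*} [Group Γ] (hfg : Group.FG Γ)
    (hq : ∀ (F : Type) [Group F] [Finite F] (φ : Γ →* F) (γ : Γ), φ γ = 1)
    {n : ℕ} (ρ : Γ →* Matrix (Fin n) (Fin n) ℂ) (γ : Γ) : ρ γ = 1 := by
  obtain ⟨S, hS, hSfin⟩ := (Monoid.fg_iff).1 (Group.fg_iff_monoid_fg.1 hfg)
  -- The set of entries of the generators, which generate `Γ` already as a monoid.
  let E : Set ℂ := (fun t : Γ × Fin n × Fin n => ρ t.1 t.2.1 t.2.2) '' (S ×ˢ Set.univ)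
  have hE : E.Finite := (hSfin.prod Set.finite_univ).image _
  let A : Subalgebra ℤ ℂ := Algebra.adjoin ℤ E
  have hAft : Algebra.FiniteType ℤ A :=
    A.fg_iff_finiteType.1 ((Subalgebra.fg_def).2 ⟨E, hE, rfl⟩)
  have hone : ∀ i j, (1 : Matrix (Fin n) (Fin n) ℂ) i j ∈ A := by
    intro i j
    rw [Matrix.one_apply]
    split_ifs
    · exact A.one_mem
    · exact A.zero_mem
  have hmem : ∀ g : Γ, ∀ i j, ρ g i j ∈ A := by
    intro g
    have hg : g ∈ Submonoid.closure S := hS ▸ Submonoid.mem_top g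
    induction hg using Submonoid.closure_induction with
    | mem x hx => exact fun i j => Algebra.subset_adjoin ⟨(x, i, j), ⟨hx, trivial⟩, rfl⟩
    | one => simpa only [map_one] using hone
    | mul x y _ _ hx hy =>
      intro i j
      rw [map_mul, Matrix.mul_apply]
      exact A.sum_mem fun k _ => A.mul_mem (hx i k) (hy k j)
  let ρA : Γ →* Matrix (Fin n) (Fin n) A :=
    { toFun := fun g => Matrix.of fun i j => ⟨ρ g i j, hmem g i j⟩
      map_one' := by
        ext i j
        simp only [Matrix.of_apply, map_one, Matrix.one_apply]
        split_ifs <;> rfl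
      map_mul' := fun x y => by
        ext i j
        simp [Matrix.mul_apply] }
  ext i j
  by_contra hne
  have hane : ρA γ i j - (1 : Matrix (Fin n) (Fin n) A) i j ≠ 0 := by
    intro h0
    apply hne
    have h1 := congrArg (Subtype.val) (sub_eq_zero.1 h0)
    rw [Matrix.one_apply] at h1 ⊢
    refine h1.trans ?_
    split_ifs <;> rfl
  obtain ⟨m, ham, hfinm⟩ := exists_maximal_finite_quotient A _ hane
  let red : Matrix (Fin n) (Fin n) A →* Matrix (Fin n) (Fin n) (A ⧸ m) :=
    (Ideal.Quotient.mk m).mapMatrix.toMonoidHom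
  have htriv := hq (Matrix (Fin n) (Fin n) (A ⧸ m))ˣ (red.comp ρA).toHomUnits γ
  have h2 : red (ρA γ) = 1 := congrArg Units.val htriv
  have h3 : red (ρA γ) = red 1 := by rw [h2, map_one]
  have h4 : Ideal.Quotient.mk m (ρA γ i j) =
      Ideal.Quotient.mk m ((1 : Matrix (Fin n) (Fin n) A) i j) := congrFun (congrFun h3 i) j
  exact ham (Ideal.Quotient.eq.1 h4)

theorem linear_rep_trivial {Γ : Type*} [Group Γ] (hfg : Group.FG Γ)
    (hq : ∀ (F : Type) [Group F] [Finite F] (φ : Γ →* F) (γ : Γ), φ γ = 1)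
    {V : Type*} [AddCommGroup V] [Module ℂ V] [FiniteDimensional ℂ V]
    (ρ : Γ →* Module.End ℂ V) (γ : Γ) : ρ γ = 1 := by
  let e := LinearMap.toMatrixAlgEquiv (Module.finBasis ℂ V)
  have h := matrix_rep_trivial hfg hq (e.toRingEquiv.toRingHom.toMonoidHom.comp ρ) γ
  apply e.injective
  rw [map_one]
  exact h

/-- If a finitely generated group with no nontrivial finite quotients acts on a probability
space by measure-preserving transformations and the action has discrete spectrum, then the
Koopman representation is trivial. -/
theorem koopman_trivial_of_no_finite_quotients
    (Γ : Type*) [Group Γ] (hfg : Group.FG Γ)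
    (hq : ∀ (F : Type) [Group F] [Finite F] (φ : Γ →* F) (γ : Γ), φ γ = 1)
    (X : Type*) [MeasurableSpace X] (μ : Measure X) [IsProbabilityMeasure μ]
    [MulAction Γ X]
    (hmp : ∀ γ : Γ, MeasurePreserving (fun x : X => γ • x) μ μ)
    (hds : (sSup {W : Submodule ℂ (Lp ℂ 2 μ) |
        IsClosed (W : Set (Lp ℂ 2 μ)) ∧ FiniteDimensional ℂ W ∧
        ∀ γ : Γ, ∀ f ∈ W,
          Lp.compMeasurePreserving (fun x : X => γ⁻¹ • x) (hmp γ⁻¹) f ∈ W}).topologicalClosure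
      = ⊤)
    (γ : Γ) (f : Lp ℂ 2 μ) :
    (fun x : X => f (γ⁻¹ • x)) =ᵐ[μ] f := by
  let U : Γ → Lp ℂ 2 μ →ₗᵢ[ℂ] Lp ℂ 2 μ := fun g =>
    Lp.compMeasurePreservingₗᵢ ℂ (fun x : X => g⁻¹ • x) (hmp g⁻¹)
  have hUae : ∀ g f, U g f =ᵐ[μ] fun x => f (g⁻¹ • x) := fun g f =>
    Lp.coeFn_compMeasurePreserving f (hmp g⁻¹)
  have hU1 : ∀ f, U 1 f = f := fun f => by
    refine Lp.ext ((hUae 1 f).trans (Filter.Eventually.of_forall fun x => ?_))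
    simp
  have hUmul : ∀ g h f, U (g * h) f = U g (U h f) := fun g h f => by
    refine Lp.ext ((hUae (g * h) f).trans ?_)
    have h1 := (hmp g⁻¹).quasiMeasurePreserving.ae_eq_comp (hUae h f)
    refine Filter.EventuallyEq.trans ?_ ((hUae g (U h f)).trans h1).symm
    exact Filter.Eventually.of_forall fun x => by simp [mul_smul]
  -- The fixed space of `γ`.
  let K : Submodule ℂ (Lp ℂ 2 μ) := LinearMap.eqLocus (U γ).toLinearMap LinearMap.id
  have hKclosed : IsClosed (K : Set (Lp ℂ 2 μ)) :=
    isClosed_eq (U γ).continuous continuous_id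
  have hK : K = ⊤ := by
    rw [eq_top_iff, ← hds]
    refine Submodule.topologicalClosure_minimal _ (sSup_le ?_) hKclosed
    rintro W ⟨-, hWfin, hWinv⟩ w hw
    let ρ : Γ →* Module.End ℂ W :=
      { toFun := fun g => (U g).toLinearMap.restrict (hWinv g)
        map_one' := LinearMap.ext fun v => Subtype.ext (hU1 v)
        map_mul' := fun g h => LinearMap.ext fun v => Subtype.ext (hUmul g h v) }
    have h1 := LinearMap.congr_fun (linear_rep_trivial hfg hq ρ γ) ⟨w, hw⟩
    exact congrArg Subtype.val h1
  have hf : U γ f = f := (hK ▸ Submodule.mem_top : f ∈ K)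
  have h2 := hUae γ f
  rw [hf] at h2
  exact h2.symm
end

section
/- Let Γ be a finitely generated group with only finitely many normal subgroups of finite index, and let N be the intersection of all normal subgroups of Γ of finite index. Suppose Γ acts on a probability space (X, μ) by measure-preserving transformations and the action has discrete spectrum, i.e. L²(X, μ; ℂ) is the closed linear span of its finite-dimensional Γ-invariant closed subspaces under the Koopman representation. Then the Koopman representation is trivial on N: for every γ ∈ N and every f ∈ L²(X, μ; ℂ), the function x ↦ f(γ⁻¹ · x) equals f in L²(X, μ; ℂ). In particular, the Koopman representation factors through the maximal finite quotient Γ/N. -/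
/-!
On a finite-dimensional invariant subspace `W` of `L²`, the Koopman representation is a
homomorphism from the finitely generated group `Γ` to `GL(W)`. Its image is residually finite by
Malcev's theorem, so every element of `N` acts trivially on `W`. The vectors fixed by `γ ∈ N` form
a closed subspace of `L²` which contains all these `W`, hence it is everything.

Malcev's theorem is proved in `exists_finiteIndex_of_matrix`. The entries of the matrices of a
finite set of monoid generators of `Γ` generate a ring `A ⊆ ℂ` of finite type over `ℤ`, and all of
`Γ` is represented by matrices over `A`. Since `ℤ` is a Jacobson ring, so is the domain `A`; thus a
nonzero element of `A`, such as a nonzero entry of `ρ γ - 1`, is missed by some maximal ideal `m`.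
The field `A ⧸ m` is finite by Zariski's lemma (`finite_of_field_of_finiteType_int`), so the
reduction of the representation modulo `m` has finite image and does not kill `γ`.
-/

open MeasureTheory

theorem finite_of_field_of_finiteType_int (K : Type*) [Field K] [inst : Algebra ℤ K]
    [Algebra.FiniteType ℤ K] : Finite K := by
  -- all `ℤ`-algebra structures on `K` agree; the quotient `A ⧸ m` carries a non-canonical one
  obtain rfl : inst = Ring.toIntAlgebra K := Subsingleton.elim _ _
  have := isJacobsonRing_int
  have hfin : Module.Finite ℤ K := finite_of_finite_type_of_isJacobsonRing ℤ K
  have hinj : ¬ Function.Injective (algebraMap ℤ K) := fun h =>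
    Int.not_isField (isField_of_isIntegral_of_isField h (Field.toIsField K))
  rw [injective_iff_map_eq_zero] at hinj
  push Not at hinj
  obtain ⟨n, hn, hn0⟩ := hinj
  refine Module.finite_of_fg_torsion K fun x => ⟨⟨n, mem_nonZeroDivisors_of_ne_zero hn0⟩, ?_⟩
  change n • x = 0
  rw [Algebra.smul_def, hn, zero_mul]

/-- Malcev's theorem: the image of a finitely generated group in `GLₙ(ℂ)` is residually finite. -/
theorem exists_finiteIndex_of_matrix {Γ : Type*} [Group Γ] (hfg : Group.FG Γ) {n : ℕ}
    (ρ : Γ →* Matrix (Fin n) (Fin n) ℂ) (γ : Γ) (hγ : ρ γ ≠ 1) :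
    ∃ H : Subgroup Γ, H.Normal ∧ H.FiniteIndex ∧ γ ∉ H := by
  classical
  obtain ⟨S, hS⟩ := (Group.fg_iff_monoid_fg.1 hfg).fg_top
  let T : Set ℂ := ⋃ s ∈ S, Set.range fun ij : Fin n × Fin n => ρ s ij.1 ij.2
  have hT : T.Finite := S.finite_toSet.biUnion fun s _ => Set.finite_range _
  let A : Subalgebra ℤ ℂ := Algebra.adjoin ℤ T
  have hA : Algebra.FiniteType ℤ A := .adjoin_of_finite hT
  have hent : ∀ g : Γ, ∃ M : Matrix (Fin n) (Fin n) A, A.val.toRingHom.mapMatrix M = ρ g := by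
    intro g
    have hg : g ∈ Submonoid.closure (S : Set Γ) := by rw [hS]; trivial
    induction hg using Submonoid.closure_induction with
    | mem s hs =>
      refine ⟨Matrix.of fun i j => ⟨ρ s i j, Algebra.subset_adjoin ?_⟩, ?_⟩
      · exact Set.mem_biUnion hs ⟨(i, j), rfl⟩
      · ext i j; rfl
    | one => exact ⟨1, by rw [map_one, map_one]⟩
    | mul x y _ _ hx hy =>
      obtain ⟨M, hM⟩ := hx
      obtain ⟨M', hM'⟩ := hy
      exact ⟨M * M', by rw [map_mul, map_mul, hM, hM']⟩
  have hinj : Function.Injective (A.val.toRingHom.mapMatrix (m := Fin n)) := by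
    intro M M' h
    ext i j
    exact congrFun (congrFun h i) j
  choose M hM using hent
  let σ : Γ →* Matrix (Fin n) (Fin n) A :=
    { toFun := M
      map_one' := hinj (by rw [hM, map_one, map_one])
      map_mul' := fun x y => hinj (by rw [hM, map_mul, map_mul, hM, hM]) }
  have hσ : σ γ ≠ 1 := fun h => hγ (by
    rw [← hM γ, show M γ = 1 from h, map_one])
  obtain ⟨i, j, hij⟩ : ∃ i j, σ γ i j - (1 : Matrix (Fin n) (Fin n) A) i j ≠ 0 := by
    by_contra! h
    exact hσ (by ext i j; exact congrArg _ (sub_eq_zero.1 (h i j)))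
  have := isJacobsonRing_int
  have hJ : IsJacobsonRing A := isJacobsonRing_of_finiteType (A := ℤ)
  have hjac : (⊥ : Ideal A).jacobson = ⊥ :=
    isJacobsonRing_iff_prime_eq.1 hJ ⊥ Ideal.isPrime_bot
  obtain ⟨m, hm, hmem⟩ : ∃ m : Ideal A, m.IsMaximal ∧
      σ γ i j - (1 : Matrix (Fin n) (Fin n) A) i j ∉ m := by
    by_contra! h
    refine hij ((Submodule.mem_bot A).1 (hjac ▸ ?_))
    exact Ideal.mem_sInf.2 fun {I} hI => h I hI.2
  let := Ideal.Quotient.field m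
  have hft : Algebra.FiniteType ℤ (A ⧸ m) := inferInstance
  have hfin : Finite (A ⧸ m) :=
    finite_of_field_of_finiteType_int (A ⧸ m)
  let τ : Γ →* (Matrix (Fin n) (Fin n) (A ⧸ m))ˣ :=
    (((Ideal.Quotient.mk m).mapMatrix : _ →+* Matrix (Fin n) (Fin n) (A ⧸ m)).toMonoidHom.comp
      σ).toHomUnits
  have hfinM : Finite (Matrix (Fin n) (Fin n) (A ⧸ m)) :=
    inferInstanceAs (Finite (Fin n → Fin n → A ⧸ m))
  refine ⟨τ.ker, inferInstance, inferInstance, fun h => hmem ?_⟩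
  have h1 : (Ideal.Quotient.mk m).mapMatrix (σ γ) = 1 :=
    congrArg Units.val (MonoidHom.mem_ker.1 h)
  rw [← map_one (Ideal.Quotient.mk m).mapMatrix] at h1
  exact Ideal.Quotient.eq.1 (congrFun (congrFun h1 i) j)

/-- The coordinate-free form of Malcev's theorem, for a representation given as a homomorphism to
the endomorphisms of a finite-dimensional space. -/
theorem rep_eq_one_of_mem {Γ : Type*} [Group Γ] (hfg : Group.FG Γ)
    {W : Type*} [AddCommGroup W] [Module ℂ W] [FiniteDimensional ℂ W]
    (ρ : Γ →* Module.End ℂ W) (γ : Γ)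
    (hγ : γ ∈ sInf {H : Subgroup Γ | H.Normal ∧ H.FiniteIndex}) : ρ γ = 1 := by
  by_contra hne
  let e := LinearMap.toMatrixAlgEquiv (Module.finBasis ℂ W)
  obtain ⟨H, hH, hH', hmem⟩ := exists_finiteIndex_of_matrix hfg
    ((e : Module.End ℂ W →* _).comp ρ) γ
    (fun h => hne (e.injective (h.trans (map_one e).symm)))
  exact hmem (Subgroup.mem_sInf.1 hγ H ⟨hH, hH'⟩)

/-- The Koopman representation on `L²`, as a homomorphism to linear endomorphisms. -/
noncomputable def koopman {Γ : Type*} [Group Γ] {X : Type*} [MeasurableSpace X] {μ : Measure X}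
    [MulAction Γ X] (hmp : ∀ γ : Γ, MeasurePreserving (fun x : X => γ • x) μ μ) :
    Γ →* Module.End ℂ (Lp ℂ 2 μ) where
  toFun γ := Lp.compMeasurePreservingₗ ℂ (fun x : X => γ⁻¹ • x) (hmp γ⁻¹)
  map_one' := by
    ext1 f
    have h : (fun x : X => (1 : Γ)⁻¹ • x) = id := by ext x; simp
    simp only [Lp.compMeasurePreservingₗ_apply, h]
    exact Lp.compMeasurePreserving_id_apply f
  map_mul' a b := by
    ext1 f
    have h : (fun x : X => (a * b)⁻¹ • x) = (fun x => b⁻¹ • x) ∘ fun x => a⁻¹ • x := by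
      ext x; simp [mul_smul]
    simp only [Lp.compMeasurePreservingₗ_apply, h]
    exact Lp.compMeasurePreserving_comp_apply f (hmp b⁻¹) (hmp a⁻¹)

open MeasureTheory

/-- If a finitely generated group `Γ` with only finitely many finite-index normal subgroups
acts on a probability space by measure-preserving transformations with discrete spectrum, then
the Koopman representation is trivial on the intersection `N` of all finite-index normal
subgroups of `Γ` (hence factors through the maximal finite quotient `Γ/N`). -/
theorem koopman_trivial_on_residual_kernel
    (Γ : Type*) [Group Γ] (hfg : Group.FG Γ)
    (hfin : {H : Subgroup Γ | H.Normal ∧ H.FiniteIndex}.Finite)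
    (N : Subgroup Γ) (hN : N = sInf {H : Subgroup Γ | H.Normal ∧ H.FiniteIndex})
    (X : Type*) [MeasurableSpace X] (μ : Measure X) [IsProbabilityMeasure μ]
    [MulAction Γ X]
    (hmp : ∀ γ : Γ, MeasurePreserving (fun x : X => γ • x) μ μ)
    (hds : (sSup {W : Submodule ℂ (Lp ℂ 2 μ) |
        IsClosed (W : Set (Lp ℂ 2 μ)) ∧ FiniteDimensional ℂ W ∧
        ∀ γ : Γ, ∀ f ∈ W,
          Lp.compMeasurePreserving (fun x : X => γ⁻¹ • x) (hmp γ⁻¹) f ∈ W}).topologicalClosure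
      = ⊤) :
    ∀ γ ∈ N, ∀ f : Lp ℂ 2 μ, (fun x : X => f (γ⁻¹ • x)) =ᵐ[μ] f := by
  intro γ hγ f
  subst hN
  -- the closed subspace of vectors fixed by `γ`
  let F : Submodule ℂ (Lp ℂ 2 μ) := LinearMap.eqLocus (koopman hmp γ) LinearMap.id
  have hFc : IsClosed (F : Set (Lp ℂ 2 μ)) :=
    isClosed_eq (Lp.isometry_compMeasurePreserving (hmp γ⁻¹)).continuous continuous_id
  have hle : sSup {W : Submodule ℂ (Lp ℂ 2 μ) |
        IsClosed (W : Set (Lp ℂ 2 μ)) ∧ FiniteDimensional ℂ W ∧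
        ∀ γ : Γ, ∀ f ∈ W,
          Lp.compMeasurePreserving (fun x : X => γ⁻¹ • x) (hmp γ⁻¹) f ∈ W} ≤ F := by
    refine sSup_le ?_
    rintro W ⟨-, hW, hinv⟩ g hg
    let ρ : Γ →* Module.End ℂ W :=
      { toFun := fun a => (koopman hmp a).restrict (hinv a)
        map_one' := by
          ext1 w
          exact Subtype.ext (LinearMap.congr_fun (map_one (koopman hmp)) (w : Lp ℂ 2 μ))
        map_mul' := fun a b => by
          ext1 w
          exact Subtype.ext (LinearMap.congr_fun (map_mul (koopman hmp) a b) (w : Lp ℂ 2 μ)) }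
    have h1 := rep_eq_one_of_mem hfg ρ γ hγ
    exact congrArg Subtype.val (LinearMap.congr_fun h1 ⟨g, hg⟩)
  have hf : f ∈ F := by
    have h2 := Submodule.topologicalClosure_minimal _ hle hFc
    rw [hds] at h2
    exact h2 trivial
  have h3 : Lp.compMeasurePreserving (fun x : X => γ⁻¹ • x) (hmp γ⁻¹) f = f := hf
  have h4 := Lp.coeFn_compMeasurePreserving f (hmp γ⁻¹)
  rw [h3] at h4
  exact h4.symm
end
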